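/- Let n ≥ 1 and let a : Fin n → ℝ be a family of positive real numbers. Then (∑ j, a j) ≤ (∑ j, (a j)⁻¹)^(n−1) · (∏ i, a i). -/

import Mathlib

/-!
Put `xᵢ = aᵢ⁻¹`. Dividing by `∏ aᵢ` turns the inequality into `eₙ₋₁(x) ≤ e₁(x) ^ (n - 1)` for the
elementary symmetric polynomials. In fact `eₖ(x) ≤ e₁(x) ^ k` for every `k` when `x` is nonnegative,
since each squarefree monomial of degree `k` occurs in the expansion of `(∑ xᵢ) ^ k`.
-/

open Finset

theorem esymm_cons_succ {R : Type*} [CommSemiring R] (x : R) (s : Multiset R) (k : ℕ) :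
    (x ::ₘ s).esymm (k + 1) = s.esymm (k + 1) + x * s.esymm k := by
  simp [Multiset.esymm, Multiset.powersetCard_cons, Multiset.sum_map_mul_left]

section OrderedSemiring

variable {R : Type*} [CommSemiring R] [PartialOrder R] [IsOrderedRing R]

theorem esymm_le_sum_pow {s : Multiset R} (hs : ∀ x ∈ s, 0 ≤ x) (k : ℕ) :
    s.esymm k ≤ s.sum ^ k := by
  induction s using Multiset.induction_on generalizing k with
  | empty => cases k <;> simp [Multiset.esymm, Multiset.powersetCard_zero_right]
  | cons x s ih =>
    obtain ⟨hx, hs⟩ := Multiset.forall_mem_cons.1 hs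
    cases k with
    | zero => simp [Multiset.esymm]
    | succ k =>
      have hsum : 0 ≤ s.sum := Multiset.sum_nonneg hs
      calc (x ::ₘ s).esymm (k + 1)
          = s.esymm (k + 1) + x * s.esymm k := esymm_cons_succ x s k
        _ ≤ s.sum ^ (k + 1) + x * s.sum ^ k := by gcongr <;> exact ih hs _
        _ = (x + s.sum) * s.sum ^ k := by ring
        _ ≤ (x + s.sum) * (x + s.sum) ^ k := by
            gcongr
            exact le_add_of_nonneg_left hx
        _ = (x ::ₘ s).sum ^ (k + 1) := by rw [Multiset.sum_cons, pow_succ']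

theorem sum_prod_erase_le_sum_pow {ι : Type*} [DecidableEq ι] {s : Finset ι} {k : ℕ}
    (hs : #s = k + 1) {x : ι → R} (hx : ∀ i ∈ s, 0 ≤ x i) :
    ∑ i ∈ s, ∏ j ∈ s.erase i, x j ≤ (∑ i ∈ s, x i) ^ k := by
  have image_erase_subset : s.image s.erase ⊆ s.powersetCard k := by
    refine image_subset_iff.2 fun i hi ↦ mem_powersetCard.2 ⟨erase_subset i s, ?_⟩
    rw [card_erase_of_mem hi, hs, Nat.add_sub_cancel]
  calc ∑ i ∈ s, ∏ j ∈ s.erase i, x j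
      = ∑ t ∈ s.image s.erase, ∏ j ∈ t, x j :=
        (sum_image (f := fun t ↦ ∏ j ∈ t, x j) s.erase_injOn).symm
    _ ≤ ∑ t ∈ s.powersetCard k, ∏ j ∈ t, x j :=
        sum_le_sum_of_subset_of_nonneg image_erase_subset fun t ht _ ↦
          prod_nonneg fun j hj ↦ hx j ((mem_powersetCard.1 ht).1 hj)
    _ = (s.val.map x).esymm k := (esymm_map_val x s k).symm
    _ ≤ (∑ i ∈ s, x i) ^ k := esymm_le_sum_pow (by simpa using hx) k

end OrderedSemiring

theorem prod_erase_inv_mul_prod {ι K : Type*} [DecidableEq ι] [CommGroupWithZero K] {s : Finset ι}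
    {a : ι → K} {i : ι} (hi : i ∈ s) (ha : ∀ j ∈ s.erase i, a j ≠ 0) :
    (∏ j ∈ s.erase i, (a j)⁻¹) * ∏ j ∈ s, a j = a i := by
  rw [← prod_erase_mul s a hi, prod_inv_distrib, inv_mul_cancel_left₀ (prod_ne_zero_iff.2 ha)]

theorem sum_le_sum_inv_pow_mul_prod_general {ι K : Type*} [Semifield K] [LinearOrder K]
    [IsStrictOrderedRing K] {s : Finset ι} {k : ℕ} (hs : #s = k + 1) {a : ι → K}
    (ha : ∀ i ∈ s, 0 < a i) :
    ∑ i ∈ s, a i ≤ (∑ i ∈ s, (a i)⁻¹) ^ k * ∏ i ∈ s, a i := by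
  classical
  calc ∑ i ∈ s, a i
      = (∑ i ∈ s, ∏ j ∈ s.erase i, (a j)⁻¹) * ∏ i ∈ s, a i := by
        rw [sum_mul]
        exact sum_congr rfl fun i hi ↦ (prod_erase_inv_mul_prod hi fun j hj ↦
          (ha j (mem_of_mem_erase hj)).ne').symm
    _ ≤ (∑ i ∈ s, (a i)⁻¹) ^ k * ∏ i ∈ s, a i :=
        mul_le_mul_of_nonneg_right
          (sum_prod_erase_le_sum_pow hs fun i hi ↦ inv_nonneg.2 (ha i hi).le)
          (prod_nonneg fun i hi ↦ (ha i hi).le)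

/-- Scalar (eigenvalue) form of the arithmetic–geometric mean type inequality:
for positive reals `a₁, …, aₙ`, one has `∑ aⱼ ≤ (∑ aⱼ⁻¹)^(n−1) · ∏ aᵢ`. -/
theorem sum_le_sum_inv_pow_mul_prod (n : ℕ) (hn : 1 ≤ n)
    (a : Fin n → ℝ) (ha : ∀ i, 0 < a i) :
    (∑ j, a j) ≤ (∑ j, (a j)⁻¹) ^ (n - 1) * ∏ i, a i :=
  sum_le_sum_inv_pow_mul_prod_general (by simp [hn]) fun i _ ↦ ha i
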